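/- Let K be a finite field with q elements, q ≥ 3, let s ≥ 2, and let T be the projective torus in ℙ^{s−1} over K. Let d be an integer with 1 ≤ d ≤ (q−2)(s−1) − 1 and write d = k(q−2) + ℓ with k ≥ 0 and 1 ≤ ℓ ≤ q−2. Then every homogeneous polynomial F ∈ K[t_1,…,t_s] of degree d that does not vanish at every point of T satisfies #{[x] ∈ T : F(x) = 0} ≤ (q−1)^{s−k−2}·((q−1)^{k+1} − (q−1) + ℓ). -/

import Mathlib

open MvPolynomial

/-- The projective torus in `ℙ^(s-1)` over `K`: the classes of points all of whose
coordinates are nonzero (a condition invariant under scaling, tested on the chosen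
representative). -/
noncomputable def projTorus (K : Type) [Field K] (s : ℕ) :
    Set (Projectivization K (Fin s → K)) :=
  {p | ∀ i, p.rep i ≠ 0}

/-!
The classes of the torus are lines with `q - 1` nonzero points each, so it suffices to bound the
zeros of `F` on the affine grid `(K*)^s`. By the Alon–Füredi theorem a polynomial of degree `d` that
is nonzero somewhere on a grid `∏ Aᵢ` is nonzero at `∏ yᵢ` points at least, for some
`1 ≤ yᵢ ≤ #Aᵢ` with `∑ (#Aᵢ - yᵢ) ≤ d`: if `f` vanishes on `e` of the slices `x₀ = a`, then dividing
by the `e` factors `x₀ - a` lowers the degree by `e`, and each of the other `#A₀ - e` slices is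
treated by induction. When all the `Aᵢ` have size `q - 1`, spreading two factors apart at constant
sum lowers their product, so the worst case is `k` factors `1`, one factor `q - 1 - ℓ` and all
others `q - 1`.
-/

open Finset

section Specialization

variable {R : Type*} [CommSemiring R] {n : ℕ}

/-- The polynomial in `n` variables obtained by substituting the constant `a` for the first of
`n + 1` variables: the restriction of `f` to the slice `x₀ = a`. -/
noncomputable def specializeFirst (a : R) (f : MvPolynomial (Fin (n + 1)) R) :
    MvPolynomial (Fin n) R :=
  (finSuccEquiv R n f).eval (C a)

lemma eval_specializeFirst (a : R) (f : MvPolynomial (Fin (n + 1)) R) (y : Fin n → R) :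
    eval y (specializeFirst a f) = eval (Fin.cons a y : Fin (n + 1) → R) f := by
  rw [eval_eq_eval_mv_eval', Polynomial.eval_map, specializeFirst, ← Polynomial.eval₂_at_apply,
    eval_C]

lemma totalDegree_specializeFirst_le (a : R) (f : MvPolynomial (Fin (n + 1)) R) :
    (specializeFirst a f).totalDegree ≤ f.totalDegree := by
  rw [specializeFirst, Polynomial.eval_eq_sum, Polynomial.sum_def]
  refine totalDegree_finsetSum_le fun i hi ↦ ?_
  calc ((finSuccEquiv R n f).coeff i * C a ^ i).totalDegree
      ≤ ((finSuccEquiv R n f).coeff i).totalDegree +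
          (C a ^ i : MvPolynomial (Fin n) R).totalDegree := totalDegree_mul _ _
    _ = ((finSuccEquiv R n f).coeff i).totalDegree := by rw [← C_pow, totalDegree_C, add_zero]
    _ ≤ f.totalDegree :=
        (Nat.le_add_right _ i).trans
          (totalDegree_coeff_finSuccEquiv_add_le f i (Polynomial.mem_support_iff.mp hi))

lemma finSuccEquiv_rename_succ (g : MvPolynomial (Fin n) R) :
    finSuccEquiv R n (rename Fin.succ g) = Polynomial.C g := by
  induction g using MvPolynomial.induction_on with
  | C c => simp [finSuccEquiv_apply]
  | add g h hg hh => simp only [map_add, hg, hh]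
  | mul_X g i hg => rw [map_mul, map_mul, hg, rename_X, finSuccEquiv_X_succ, map_mul]

end Specialization

section Division

variable {R : Type*} [CommRing R] {n : ℕ}

lemma X_zero_sub_C_dvd_sub_rename_specializeFirst (a : R) (f : MvPolynomial (Fin (n + 1)) R) :
    X 0 - C a ∣ f - rename Fin.succ (specializeFirst a f) := by
  have finSuccEquiv_C : finSuccEquiv R n (C a) = Polynomial.C (C a) := by simp [finSuccEquiv_apply]
  rw [← map_dvd_iff (finSuccEquiv R n), map_sub, map_sub, finSuccEquiv_X_zero, finSuccEquiv_C,
    finSuccEquiv_rename_succ]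
  exact Polynomial.X_sub_C_dvd_sub_C_eval

variable [IsDomain R]

lemma exists_eq_rename_specializeFirst_add (a : R) (f : MvPolynomial (Fin (n + 1)) R) :
    ∃ g, f = rename Fin.succ (specializeFirst a f) + (X 0 - C a) * g ∧
      (g ≠ 0 → g.totalDegree + 1 ≤ f.totalDegree) := by
  obtain ⟨g, hg⟩ := X_zero_sub_C_dvd_sub_rename_specializeFirst a f
  refine ⟨g, by rw [← hg, add_sub_cancel], fun hg0 ↦ ?_⟩
  have hdeg : (X 0 - C a : MvPolynomial (Fin (n + 1)) R).totalDegree = 1 := by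
    rw [sub_eq_add_neg, ← C_neg, totalDegree_add_eq_left_of_totalDegree_lt] <;> simp
  have hne : (X 0 - C a : MvPolynomial (Fin (n + 1)) R) ≠ 0 := by
    intro h
    simp [h] at hdeg
  calc g.totalDegree + 1
      = ((X 0 - C a) * g).totalDegree := by
        rw [totalDegree_mul_of_isDomain hne hg0, hdeg, add_comm]
    _ ≤ max f.totalDegree (rename Fin.succ (specializeFirst a f)).totalDegree := by
        rw [← hg]
        exact totalDegree_sub _ _
    _ = f.totalDegree :=
        max_eq_left ((totalDegree_rename_le _ _).trans (totalDegree_specializeFirst_le a f))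

lemma exists_eval_cons_eq_sub_mul {f : MvPolynomial (Fin (n + 1)) R} {a : R} {Y : Set (Fin n → R)}
    (hf : ∀ y ∈ Y, eval (Fin.cons a y : Fin (n + 1) → R) f = 0)
    (hne : ∃ b, ∃ y ∈ Y, eval (Fin.cons b y : Fin (n + 1) → R) f ≠ 0) :
    ∃ g : MvPolynomial (Fin (n + 1)) R, g.totalDegree + 1 ≤ f.totalDegree ∧
      ∀ b, ∀ y ∈ Y, eval (Fin.cons b y : Fin (n + 1) → R) f =
        (b - a) * eval (Fin.cons b y : Fin (n + 1) → R) g := by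
  obtain ⟨g, hfg, hdeg⟩ := exists_eq_rename_specializeFirst_add a f
  have hfactor : ∀ b, ∀ y ∈ Y, eval (Fin.cons b y : Fin (n + 1) → R) f =
      (b - a) * eval (Fin.cons b y : Fin (n + 1) → R) g := by
    intro b y hy
    have hcomp : (Fin.cons b y : Fin (n + 1) → R) ∘ Fin.succ = y := rfl
    conv_lhs => rw [hfg]
    rw [map_add, eval_rename, hcomp, eval_specializeFirst, hf y hy]
    simp
  obtain ⟨b, y, hy, hby⟩ := hne
  refine ⟨g, hdeg ?_, hfactor⟩
  rintro rfl
  simp [hfactor b y hy] at hby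

lemma exists_eval_cons_eq_prod_sub_mul {f : MvPolynomial (Fin (n + 1)) R} {S : Finset R}
    {Y : Set (Fin n → R)}
    (hf : ∀ a ∈ S, ∀ y ∈ Y, eval (Fin.cons a y : Fin (n + 1) → R) f = 0)
    (hne : ∃ b, ∃ y ∈ Y, eval (Fin.cons b y : Fin (n + 1) → R) f ≠ 0) :
    ∃ g : MvPolynomial (Fin (n + 1)) R, g.totalDegree + #S ≤ f.totalDegree ∧
      ∀ b, ∀ y ∈ Y, eval (Fin.cons b y : Fin (n + 1) → R) f =
        (∏ a ∈ S, (b - a)) * eval (Fin.cons b y : Fin (n + 1) → R) g := by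
  classical
  induction S using Finset.induction with
  | empty => exact ⟨f, by simp, by simp⟩
  | insert a S ha ih =>
    obtain ⟨g, hgdeg, hg⟩ := ih fun b hb ↦ hf b (mem_insert_of_mem hb)
    have hprod : ∏ b ∈ S, (a - b) ≠ 0 :=
      prod_ne_zero_iff.mpr fun b hb ↦ sub_ne_zero.mpr (ne_of_mem_of_not_mem hb ha).symm
    have hga : ∀ y ∈ Y, eval (Fin.cons a y : Fin (n + 1) → R) g = 0 := fun y hy ↦
      (mul_eq_zero.mp ((hg a y hy).symm.trans (hf a (mem_insert_self a S) y hy))).resolve_left hprod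
    obtain ⟨b, y, hy, hby⟩ := hne
    have hgne : eval (Fin.cons b y : Fin (n + 1) → R) g ≠ 0 :=
      right_ne_zero_of_mul (hg b y hy ▸ hby)
    obtain ⟨h, hhdeg, hh⟩ := exists_eval_cons_eq_sub_mul hga ⟨b, y, hy, hgne⟩
    refine ⟨h, ?_, fun b y hy ↦ ?_⟩
    · rw [card_insert_of_notMem ha]
      lia
    · rw [hg b y hy, hh b y hy, prod_insert ha]
      ring

end Division

section GridNonzeros

variable {R : Type*} [CommSemiring R] [DecidableEq R] {n : ℕ}

/-- The points of the grid `∏ Aᵢ` at which `f` does not vanish. -/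
noncomputable def gridNonzeros (A : Fin n → Finset R) (f : MvPolynomial (Fin n) R) :
    Finset (Fin n → R) :=
  {x ∈ Fintype.piFinset A | eval x f ≠ 0}

lemma mem_gridNonzeros {A : Fin n → Finset R} {f : MvPolynomial (Fin n) R} {x : Fin n → R} :
    x ∈ gridNonzeros A f ↔ (∀ i, x i ∈ A i) ∧ eval x f ≠ 0 := by
  simp [gridNonzeros]

lemma card_gridNonzeros_succ (A : Fin (n + 1) → Finset R) (f : MvPolynomial (Fin (n + 1)) R) :
    #(gridNonzeros A f) = ∑ a ∈ A 0, #(gridNonzeros (Fin.tail A) (specializeFirst a f)) := by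
  rw [← card_sigma]
  refine card_nbij' (fun x ↦ ⟨x 0, Fin.tail x⟩) (fun z ↦ Fin.cons z.1 z.2) ?_ ?_ ?_ ?_
  · simp +contextual [Set.MapsTo, mem_gridNonzeros, eval_specializeFirst, Fin.tail]
  · simp +contextual [Set.MapsTo, mem_gridNonzeros, eval_specializeFirst, Fin.tail,
      Fin.forall_fin_succ]
  · simp [Set.LeftInvOn]
  · simp [Set.LeftInvOn]

end GridNonzeros

section AlonFuredi

variable {R : Type*} [CommRing R] [IsDomain R] [DecidableEq R] {n : ℕ}

lemma exists_gridNonzeros_specializeFirst_eq {A : Fin (n + 1) → Finset R}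
    {f : MvPolynomial (Fin (n + 1)) R} (hne : (gridNonzeros A f).Nonempty) :
    ∃ g : MvPolynomial (Fin (n + 1)) R,
      g.totalDegree + #{a ∈ A 0 | ¬ (gridNonzeros (Fin.tail A) (specializeFirst a f)).Nonempty} ≤
        f.totalDegree ∧
      ∀ b, (gridNonzeros (Fin.tail A) (specializeFirst b f)).Nonempty →
        gridNonzeros (Fin.tail A) (specializeFirst b g) =
          gridNonzeros (Fin.tail A) (specializeFirst b f) := by
  set S : Finset R := {a ∈ A 0 | ¬ (gridNonzeros (Fin.tail A) (specializeFirst a f)).Nonempty}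
  have hS : ∀ a ∈ S, ∀ y ∈ {y : Fin n → R | ∀ i, y i ∈ Fin.tail A i},
      eval (Fin.cons a y : Fin (n + 1) → R) f = 0 := by
    intro a ha y hy
    by_contra hay
    exact (mem_filter.mp ha).2 ⟨y, mem_gridNonzeros.mpr ⟨hy, by rwa [eval_specializeFirst]⟩⟩
  obtain ⟨x, hx⟩ := hne
  obtain ⟨hxA, hxf⟩ := mem_gridNonzeros.mp hx
  obtain ⟨g, hdeg, hg⟩ := exists_eval_cons_eq_prod_sub_mul hS
    ⟨x 0, Fin.tail x, fun i ↦ hxA i.succ, by rwa [Fin.cons_self_tail]⟩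
  refine ⟨g, hdeg, fun b hb ↦ ?_⟩
  have hbS : b ∉ S := fun h ↦ (mem_filter.mp h).2 hb
  have hprod : ∏ a ∈ S, (b - a) ≠ 0 :=
    prod_ne_zero_iff.mpr fun a ha ↦ sub_ne_zero.mpr (ne_of_mem_of_not_mem ha hbS).symm
  ext y
  simp only [mem_gridNonzeros, eval_specializeFirst]
  refine and_congr_right fun hy ↦ ?_
  rw [hg b y hy, mul_ne_zero_iff_left hprod]

theorem alon_furedi {A : Fin n → Finset R} {f : MvPolynomial (Fin n) R}
    (hne : (gridNonzeros A f).Nonempty) :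
    ∃ y : Fin n → ℕ, (∀ i, 1 ≤ y i ∧ y i ≤ #(A i)) ∧
      ∑ i, #(A i) ≤ ∑ i, y i + f.totalDegree ∧ ∏ i, y i ≤ #(gridNonzeros A f) := by
  induction n with
  | zero => exact ⟨0, by simp, by simp, by simpa using hne.card_pos⟩
  | succ n ih =>
    let slice (a : R) : Finset (Fin n → R) := gridNonzeros (Fin.tail A) (specializeFirst a f)
    let B : Finset R := {a ∈ A 0 | (slice a).Nonempty}
    have hcount : #(gridNonzeros A f) = ∑ a ∈ A 0, #(slice a) := card_gridNonzeros_succ A f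
    have hBne : B.Nonempty := by
      obtain ⟨a, ha, hpos⟩ := exists_ne_zero_of_sum_ne_zero (hcount ▸ hne.card_ne_zero)
      exact ⟨a, mem_filter.mpr ⟨ha, card_ne_zero.mp hpos⟩⟩
    obtain ⟨g, hgdeg, hg⟩ := exists_gridNonzeros_specializeFirst_eq hne
    obtain ⟨b, hb, hmin⟩ := exists_min_image B (fun a ↦ #(slice a)) hBne
    have hslice : gridNonzeros (Fin.tail A) (specializeFirst b g) = slice b :=
      hg b (mem_filter.mp hb).2
    obtain ⟨y, hy, hsum, hprod⟩ := ih (hslice ▸ (mem_filter.mp hb).2)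
    refine ⟨Fin.cons #B y, ?_, ?_, ?_⟩
    · exact Fin.cases ⟨hBne.card_pos, card_filter_le _ _⟩ hy
    · have hsplit := card_filter_add_card_filter_not (s := A 0) (fun a ↦ (slice a).Nonempty)
      have hdeg := totalDegree_specializeFirst_le b g
      rw [Fin.sum_univ_succ, Fin.sum_cons]
      simp only [Fin.tail] at hsum
      lia
    · rw [Fin.prod_cons]
      calc #B * ∏ i, y i ≤ #B * #(slice b) := by
            gcongr
            exact hslice ▸ hprod
        _ ≤ ∑ a ∈ B, #(slice a) := card_nsmul_le_sum B _ _ hmin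
        _ ≤ ∑ a ∈ A 0, #(slice a) := sum_le_sum_of_subset (filter_subset _ _)
        _ = #(gridNonzeros A f) := hcount.symm

end AlonFuredi

lemma mul_le_mul_of_add_eq_add {a b x y : ℕ} (hax : a ≤ x) (hxb : x ≤ b) (h : x + y = a + b) :
    a * b ≤ x * y := by
  obtain ⟨u, rfl⟩ := Nat.exists_eq_add_of_le hax
  obtain ⟨v, rfl⟩ := Nat.exists_eq_add_of_le hxb
  obtain rfl : y = a + v := by lia
  nlinarith [Nat.zero_le (u * v)]

lemma pow_card_mul_le_pow_succ_mul_prod {ι : Type*} {s : Finset ι} {y : ι → ℕ} {m k c : ℕ}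
    (hy : ∀ i ∈ s, 1 ≤ y i ∧ y i ≤ m) (hc : 1 ≤ c) (hcm : c ≤ m)
    (hsum : #s * m + c ≤ ∑ i ∈ s, y i + k * (m - 1) + m) :
    m ^ #s * c ≤ m ^ (k + 1) * ∏ i ∈ s, y i := by
  classical
  induction s using Finset.induction generalizing k c with
  | empty => simpa using hcm.trans (Nat.le_self_pow k.succ_ne_zero m)
  | insert i s hi ih =>
    obtain ⟨⟨hi1, him⟩, hys⟩ := (forall_mem_insert _ _ _).mp hy
    rw [card_insert_of_notMem hi, sum_insert hi, add_one_mul] at hsum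
    rw [card_insert_of_notMem hi, prod_insert hi]
    rcases le_or_gt c (y i) with hcy | hyc
    · have hrest : m ^ #s * (c + m - y i) ≤ m ^ (k + 1) * ∏ j ∈ s, y j :=
        ih hys (by lia) (by lia) (by lia)
      have hspread : c * m ≤ y i * (c + m - y i) := mul_le_mul_of_add_eq_add hcy him (by lia)
      calc m ^ (#s + 1) * c = m ^ #s * (c * m) := by ring
        _ ≤ m ^ #s * (y i * (c + m - y i)) := by gcongr
        _ = y i * (m ^ #s * (c + m - y i)) := by ring
        _ ≤ y i * (m ^ (k + 1) * ∏ j ∈ s, y j) := by gcongr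
        _ = m ^ (k + 1) * (y i * ∏ j ∈ s, y j) := by ring
    · have hsum_le : ∑ j ∈ s, y j ≤ #s * m := sum_le_card_nsmul s y m fun j hj ↦ (hys j hj).2
      obtain ⟨k, rfl⟩ : ∃ k', k = k' + 1 :=
        Nat.exists_eq_succ_of_ne_zero (by rintro rfl; lia)
      rw [add_one_mul] at hsum
      have hrest : m ^ #s * (1 + c - y i) ≤ m ^ (k + 1) * ∏ j ∈ s, y j :=
        ih hys (by lia) (by lia) (by lia)
      have hspread : 1 * c ≤ y i * (1 + c - y i) := mul_le_mul_of_add_eq_add hi1 hyc.le (by lia)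
      calc m ^ (#s + 1) * c = m ^ #s * m * (1 * c) := by ring
        _ ≤ m ^ #s * m * (y i * (1 + c - y i)) := by gcongr
        _ = m * y i * (m ^ #s * (1 + c - y i)) := by ring
        _ ≤ m * y i * (m ^ (k + 1) * ∏ j ∈ s, y j) := by gcongr
        _ = m ^ (k + 1 + 1) * (y i * ∏ j ∈ s, y j) := by ring

lemma pow_mul_sub_le_pow_succ_mul_card_gridNonzeros {R : Type*} [CommRing R] [IsDomain R]
    [DecidableEq R] {n k ℓ : ℕ} {A : Finset R} {f : MvPolynomial (Fin n) R} (hℓ : ℓ < #A)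
    (hdeg : f.totalDegree ≤ k * (#A - 1) + ℓ) (hne : (gridNonzeros (fun _ ↦ A) f).Nonempty) :
    #A ^ n * (#A - ℓ) ≤ #A ^ (k + 1) * #(gridNonzeros (fun _ ↦ A) f) := by
  obtain ⟨y, hy, hsum, hprod⟩ := alon_furedi hne
  rw [Fin.sum_const, smul_eq_mul] at hsum
  calc #A ^ n * (#A - ℓ) = #A ^ #(univ : Finset (Fin n)) * (#A - ℓ) := by rw [card_fin]
    _ ≤ #A ^ (k + 1) * ∏ i, y i :=
        pow_card_mul_le_pow_succ_mul_prod (fun i _ ↦ hy i) (by lia) (by lia)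
          (by rw [card_fin]; lia)
    _ ≤ #A ^ (k + 1) * #(gridNonzeros (fun _ ↦ A) f) := by gcongr

lemma le_pow_mul_of_mul_add_le_pow {m r k ℓ z N : ℕ} (hℓ : ℓ < m)
    (htotal : m * z + N ≤ m ^ (r + k + 2))
    (hN : m ^ (r + k + 2) * (m - ℓ) ≤ m ^ (k + 1) * N) :
    z ≤ m ^ r * (m ^ (k + 1) - m + ℓ) := by
  have hm : 0 < m := by lia
  have hN' : m * (m ^ r * (m - ℓ)) ≤ N := by
    refine le_of_mul_le_mul_left ?_ (pow_pos hm (k + 1))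
    calc m ^ (k + 1) * (m * (m ^ r * (m - ℓ))) = m ^ (r + k + 2) * (m - ℓ) := by ring
      _ ≤ m ^ (k + 1) * N := hN
  have hz : z + m ^ r * (m - ℓ) ≤ m ^ r * m ^ (k + 1) := by
    refine le_of_mul_le_mul_left ?_ hm
    calc m * (z + m ^ r * (m - ℓ)) = m * z + m * (m ^ r * (m - ℓ)) := mul_add _ _ _
      _ ≤ m * z + N := by gcongr
      _ ≤ m ^ (r + k + 2) := htotal
      _ = m * (m ^ r * m ^ (k + 1)) := by ring
  have hpow : m ≤ m ^ (k + 1) := Nat.le_self_pow k.succ_ne_zero m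
  have hsplit : m ^ (k + 1) = m ^ (k + 1) - m + ℓ + (m - ℓ) := by lia
  rw [hsplit, mul_add] at hz
  exact le_of_add_le_add_right hz

lemma eval_smul_of_isHomogeneous {σ R : Type*} [CommSemiring R] {F : MvPolynomial σ R} {d : ℕ}
    (hF : F.IsHomogeneous d) (c : R) (x : σ → R) : eval (c • x) F = c ^ d * eval x F := by
  rw [eval_eq, eval_eq, mul_sum]
  refine sum_congr rfl fun m hm ↦ ?_
  have hmd : ∑ i ∈ m.support, m i = d := by
    rw [← hF (mem_support_iff.mp hm), Finsupp.weight_apply, Finsupp.sum]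
    simp
  simp only [Pi.smul_apply, smul_eq_mul, mul_pow]
  rw [prod_mul_distrib, prod_pow_eq_pow_sum, hmd]
  ring

lemma card_units_mul_ncard_le_card {K V : Type*} [DivisionRing K] [AddCommGroup V] [Module K V]
    {Z : Set (Projectivization K V)} {S : Finset V} (hS : ∀ p ∈ Z, ∀ c : Kˣ, c • p.rep ∈ S) :
    Nat.card Kˣ * Z.ncard ≤ #S := by
  rw [← Set.ncard_univ, ← Set.ncard_prod, ← Set.ncard_coe_finset]
  refine Set.ncard_le_ncard_of_injOn (fun z ↦ z.1 • z.2.rep) (fun z hz ↦ hS z.2 hz.2 z.1) ?_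
  rintro ⟨c, p⟩ - ⟨e, r⟩ - (h : c • p.rep = e • r.rep)
  obtain rfl : p = r := by
    rw [← p.mk_rep, ← r.mk_rep, Projectivization.mk_eq_mk_iff]
    exact ⟨c⁻¹ * e, by rw [mul_smul, ← h, inv_smul_smul]⟩
  have hc : (c : K) = e := smul_left_injective K p.rep_nonzero h
  rw [Units.ext hc]

lemma card_sub_one_mul_ncard_zeros_add_card_gridNonzeros_le {K : Type} [Field K] [Fintype K]
    [DecidableEq K] {s d : ℕ} {F : MvPolynomial (Fin s) K} (hF : F.IsHomogeneous d) :
    (Fintype.card K - 1) * {p ∈ projTorus K s | eval p.rep F = 0}.ncard +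
      #(gridNonzeros (fun _ ↦ univ.erase 0) F) ≤ (Fintype.card K - 1) ^ s := by
  have hzeros : (Fintype.card K - 1) * {p ∈ projTorus K s | eval p.rep F = 0}.ncard ≤
      #{x ∈ Fintype.piFinset fun _ : Fin s ↦ univ.erase (0 : K) | eval x F = 0} := by
    rw [← Fintype.card_units, ← Nat.card_eq_fintype_card]
    refine card_units_mul_ncard_le_card ?_
    rintro p ⟨hp, hpF⟩ c
    have heval : eval (c • p.rep) F = 0 := by
      rw [Units.smul_def, eval_smul_of_isHomogeneous hF, hpF, mul_zero]
    rw [mem_filter, Fintype.mem_piFinset]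
    exact ⟨fun i ↦ by simpa [Units.smul_def] using hp i, heval⟩
  calc _ ≤ _ := Nat.add_le_add_right hzeros _
    _ = (Fintype.card K - 1) ^ s := by
        rw [gridNonzeros, card_filter_add_card_filter_not]
        simp

/-- Upper bound for the number of zeros on the projective torus of a homogeneous
polynomial of degree `d = k(q-2) + ℓ`, `1 ≤ d ≤ (q-2)(s-1) - 1`, that does not vanish
at every point of the torus. -/
theorem stmt_5 (K : Type) [Field K] [Fintype K] (q s d k ℓ : ℕ)
    (hK : Fintype.card K = q) (hq : 3 ≤ q) (hs : 2 ≤ s)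
    (hd1 : 1 ≤ d) (hd2 : d ≤ (q - 2) * (s - 1) - 1)
    (hdk : d = k * (q - 2) + ℓ) (hl1 : 1 ≤ ℓ) (hl2 : ℓ ≤ q - 2)
    (F : MvPolynomial (Fin s) K) (hF : F.IsHomogeneous d)
    (hnv : ∃ p ∈ projTorus K s, eval p.rep F ≠ 0) :
    Set.ncard {p ∈ projTorus K s | eval p.rep F = 0} ≤
      (q - 1) ^ (s - k - 2) * ((q - 1) ^ (k + 1) - (q - 1) + ℓ) := by
  classical
  have hm : #(univ.erase (0 : K)) = q - 1 := by simp [hK]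
  have hks : k + 2 ≤ s := by
    by_contra! hlt
    have : (q - 2) * (s - 1) ≤ (q - 2) * k := by gcongr; lia
    rw [mul_comm k] at hdk
    lia
  have hdeg : F.totalDegree ≤ k * (#(univ.erase (0 : K)) - 1) + ℓ := by
    rw [hm, Nat.sub_sub]
    exact hdk ▸ hF.totalDegree_le
  obtain ⟨p, hp, hpF⟩ := hnv
  have hne : (gridNonzeros (fun _ ↦ univ.erase 0) F).Nonempty :=
    ⟨p.rep, mem_gridNonzeros.mpr ⟨fun i ↦ by simpa using hp i, hpF⟩⟩
  have hnonzeros := pow_mul_sub_le_pow_succ_mul_card_gridNonzeros (by lia) hdeg hne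
  have htotal := card_sub_one_mul_ncard_zeros_add_card_gridNonzeros_le hF
  rw [hm] at hnonzeros
  rw [hK] at htotal
  obtain ⟨r, rfl⟩ : ∃ r, s = r + k + 2 := ⟨s - k - 2, by lia⟩
  rw [show r + k + 2 - k - 2 = r by lia]
  exact le_pow_mul_of_mul_add_le_pow (by lia) htotal hnonzeros
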